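/- The Izergin–Korepin R-matrix satisfies the quantum Yang–Baxter equation with multiplicative spectral parameters: R_{12}(x) R_{13}(xy) R_{23}(y) = R_{23}(y) R_{13}(xy) R_{12}(x) as an identity of 27×27 matrices over the field of rational functions in x and y. -/

import Mathlib

/-- The 9×9 Izergin–Korepin R-matrix `R(x)` of `U_q(A₂⁽²⁾)`, where `sq = q^{1/2}`
is a chosen square root of `q`. Rows/columns are indexed by `Fin 9`
(0-based; index `(i,j)`, `1 ≤ i,j ≤ 3`, corresponds to `3(i−1)+(j−1)`). -/
noncomputable def IKR {K : Type*} [Field K] (sq x : K) : Matrix (Fin 9) (Fin 9) K :=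
  let q : K := sq ^ 2
  let a : K := q * (x - 1) / (q ^ 2 * x - 1)
  let b : K := q ^ 2 * (q * x + 1) * (x - 1) / ((q ^ 2 * x - 1) * (q ^ 3 * x + 1))
  let c : K := q * (x - 1) / (q ^ 2 * x - 1) +
    (q ^ 2 - 1) * (q ^ 3 + 1) * x / ((q ^ 2 * x - 1) * (q ^ 3 * x + 1))
  let d : K := (q ^ 2 - 1) / (q ^ 2 * x - 1)
  let e : K := (q ^ 2 - 1) * (x - 1) * sq / ((q ^ 2 * x - 1) * (q ^ 3 * x + 1))
  let f : K := (q ^ 2 - 1) * x / (q ^ 2 * x - 1)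
  let g : K := (1 - q ^ 2) * x * (x - 1) * sq ^ 5 / ((q ^ 2 * x - 1) * (q ^ 3 * x + 1))
  let p : K := (q ^ 2 - 1) * (q ^ 3 * x + q * x - q + 1) / ((q ^ 2 * x - 1) * (q ^ 3 * x + 1))
  let s : K := (q ^ 2 - 1) * x * (q ^ 3 * x - q ^ 2 * x + q ^ 2 + 1) /
    ((q ^ 2 * x - 1) * (q ^ 3 * x + 1))
  !![1, 0, 0, 0, 0, 0, 0, 0, 0;
     0, a, 0, d, 0, 0, 0, 0, 0;
     0, 0, b, 0, e, 0, p, 0, 0;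
     0, f, 0, a, 0, 0, 0, 0, 0;
     0, 0, g, 0, c, 0, e, 0, 0;
     0, 0, 0, 0, 0, a, 0, d, 0;
     0, 0, s, 0, g, 0, b, 0, 0;
     0, 0, 0, 0, 0, f, 0, a, 0;
     0, 0, 0, 0, 0, 0, 0, 0, 1]

/-- The Izergin–Korepin R-matrix reindexed by pairs, via `(i,j) ↦ 3i + j` (0-based). -/
noncomputable def IKRpair {K : Type*} [Field K] (sq x : K) :
    Matrix (Fin 3 × Fin 3) (Fin 3 × Fin 3) K := fun i j =>
  IKR sq x ⟨3 * i.1.1 + i.2.1, by have := i.1.isLt; have := i.2.isLt; omega⟩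
    ⟨3 * j.1.1 + j.2.1, by have := j.1.isLt; have := j.2.isLt; omega⟩

/-- `R ⊗ I`: action on the first two factors of `V ⊗ V ⊗ V`. -/
def R12 {K : Type*} [Field K] (R : Matrix (Fin 3 × Fin 3) (Fin 3 × Fin 3) K) :
    Matrix (Fin 3 × Fin 3 × Fin 3) (Fin 3 × Fin 3 × Fin 3) K := fun i j =>
  R (i.1, i.2.1) (j.1, j.2.1) * (if i.2.2 = j.2.2 then 1 else 0)

/-- `I ⊗ R`: action on the last two factors of `V ⊗ V ⊗ V`. -/
def R23 {K : Type*} [Field K] (R : Matrix (Fin 3 × Fin 3) (Fin 3 × Fin 3) K) :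
    Matrix (Fin 3 × Fin 3 × Fin 3) (Fin 3 × Fin 3 × Fin 3) K := fun i j =>
  (if i.1 = j.1 then 1 else 0) * R i.2 j.2

/-- Action of `R` on the first and third factors of `V ⊗ V ⊗ V`. -/
def R13 {K : Type*} [Field K] (R : Matrix (Fin 3 × Fin 3) (Fin 3 × Fin 3) K) :
    Matrix (Fin 3 × Fin 3 × Fin 3) (Fin 3 × Fin 3 × Fin 3) K := fun i j =>
  R (i.1, i.2.2) (j.1, j.2.2) * (if i.2.1 = j.2.1 then 1 else 0)


/-!
The proof clears denominators and compares entries. With `t = q^{1/2}`, every entry of `R(x)` has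
denominator dividing `D(x) = (q²x - 1)(q³x + 1)`, so `R(x) = D(x)⁻¹ • N(x)` with `N(x)` polynomial
in `t` and `x` (`IKRpair_eq`). Both sides of the Yang–Baxter equation then carry the same scalar
`(D(x) D(xy) D(y))⁻¹`, and what remains is an identity between products of three matrices with
polynomial entries, which holds in every commutative ring.

Written out in components (`mul_apply_left`, `mul_apply_right`), each of the 27 × 27 entries is a
sum over three internal indices. Since `N(x)` conserves the weight `i + j`
(`weight_eq_of_num_ne_zero`), only entries between basis vectors of equal total weight can be
nonzero. For these at most three summands survive on each side, and the resulting polynomial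
identity in `t, x, y` is checked by expansion (`num_yang_baxter_of_weight_eq`). The equation therefore holds at any `x, y` in a field where `D(x)`, `D(xy)`,
`D(y)` are nonzero (`yang_baxter_of_ne_zero`). For independent indeterminates these are nonzero
because `q²u - 1` and `q³u + 1` have constant terms `∓1` (`nN_ne_zero`).
-/

namespace IzerginKorepin

section
variable {L : Type*} [Field L]

/-- The common denominator `(q²x - 1)(q³x + 1)` of the entries of `R(x)`, where `q = t²`. It is also
the cleared form of the entry `1`. The definitions `nA`, …, `nS` below are the entries `a`, …, `s`
of `R(x)` multiplied by this denominator. -/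
def nN (t x : L) : L := (t ^ 4 * x - 1) * (t ^ 6 * x + 1)
/-- The entry `a` of `R(x)`, multiplied by `nN t x`. -/
def nA (t x : L) : L := t ^ 2 * (x - 1) * (t ^ 6 * x + 1)
/-- The entry `b` of `R(x)`, multiplied by `nN t x`. -/
def nB (t x : L) : L := t ^ 4 * (t ^ 2 * x + 1) * (x - 1)
/-- The entry `c` of `R(x)`, multiplied by `nN t x`. -/
def nC (t x : L) : L := t ^ 2 * (x - 1) * (t ^ 6 * x + 1) + (t ^ 4 - 1) * (t ^ 6 + 1) * x
/-- The entry `d` of `R(x)`, multiplied by `nN t x`. -/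
def nD (t x : L) : L := (t ^ 4 - 1) * (t ^ 6 * x + 1)
/-- The entry `e` of `R(x)`, multiplied by `nN t x`. -/
def nE (t x : L) : L := (t ^ 4 - 1) * (x - 1) * t
/-- The entry `f` of `R(x)`, multiplied by `nN t x`. -/
def nF (t x : L) : L := (t ^ 4 - 1) * x * (t ^ 6 * x + 1)
/-- The entry `g` of `R(x)`, multiplied by `nN t x`. -/
def nG (t x : L) : L := (1 - t ^ 4) * x * (x - 1) * t ^ 5
/-- The entry `p` of `R(x)`, multiplied by `nN t x`. -/
def nP (t x : L) : L := (t ^ 4 - 1) * (t ^ 6 * x + t ^ 2 * x - t ^ 2 + 1)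
/-- The entry `s` of `R(x)`, multiplied by `nN t x`. -/
def nS (t x : L) : L := (t ^ 4 - 1) * x * (t ^ 6 * x - t ^ 4 * x + t ^ 4 + 1)

/-- The matrix `N(x) = nN t x • R(x)` with denominators cleared, with its entry in row `(i, j)` and
column `(k, l)` written `num t x i j k l`. -/
def num (t x : L) : Fin 3 → Fin 3 → Fin 3 → Fin 3 → L :=
  ![![![![nN t x, 0, 0], ![0, 0, 0], ![0, 0, 0]],
      ![![0, nA t x, 0], ![nD t x, 0, 0], ![0, 0, 0]],
      ![![0, 0, nB t x], ![0, nE t x, 0], ![nP t x, 0, 0]]],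
    ![![![0, nF t x, 0], ![nA t x, 0, 0], ![0, 0, 0]],
      ![![0, 0, nG t x], ![0, nC t x, 0], ![nE t x, 0, 0]],
      ![![0, 0, 0], ![0, 0, nA t x], ![0, nD t x, 0]]],
    ![![![0, 0, nS t x], ![0, nG t x, 0], ![nB t x, 0, 0]],
      ![![0, 0, 0], ![0, 0, nF t x], ![0, nA t x, 0]],
      ![![0, 0, 0], ![0, 0, 0], ![0, 0, nN t x]]]]

/-- Case analysis on `Fin 3` whose goals mention the literals `0`, `1`, `2`, which `Matrix.cons_val`
can evaluate at directly. -/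
theorem forall_three {P : Fin 3 → Prop} (h0 : P 0) (h1 : P 1) (h2 : P 2) : ∀ i, P i := by
  intro i; fin_cases i <;> assumption

/-- Weight conservation: the entry in row `(i, j)` and column `(k, l)` vanishes unless
`i + j = k + l`. -/
theorem weight_eq_of_num_ne_zero (t x : L) : ∀ i j k l : Fin 3, num t x i j k l ≠ 0 →
    (i : ℕ) + j = k + l := by
  refine forall_three ?_ ?_ ?_ <;> refine forall_three ?_ ?_ ?_ <;>
    refine forall_three ?_ ?_ ?_ <;> refine forall_three ?_ ?_ ?_ <;>
    first
    | exact fun _ => rfl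
    | exact fun h => absurd rfl h

set_option maxHeartbeats 4000000 in
/-- The Yang–Baxter equation for the cleared matrix `N`, for the components between basis vectors
of equal total weight. -/
theorem num_yang_baxter_of_weight_eq (t x y : L) : ∀ a b c a' b' c' : Fin 3,
    (a : ℕ) + b + c = a' + b' + c' →
    ∑ p, ∑ r, ∑ s, num t x a b p r * num t (x * y) p c a' s * num t y r s b' c' =
    ∑ r, ∑ s, ∑ p, num t y b c r s * num t (x * y) a s p c' * num t x p r a' b' := by
  refine forall_three ?_ ?_ ?_ <;> refine forall_three ?_ ?_ ?_ <;>
    refine forall_three ?_ ?_ ?_ <;> refine forall_three ?_ ?_ ?_ <;>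
    refine forall_three ?_ ?_ ?_ <;> refine forall_three ?_ ?_ ?_ <;>
    first
    | exact fun h => absurd h (by decide)
    | (intro _
       simp only [Fin.sum_univ_three, num, Matrix.cons_val, mul_zero, zero_mul, add_zero,
         zero_add]
       simp only [nN, nA, nB, nC, nD, nE, nF, nG, nP, nS]
       ring)

/-- The Yang–Baxter equation for the cleared matrix `N`, in components. -/
theorem num_yang_baxter (t x y : L) (a b c a' b' c' : Fin 3) :
    ∑ p, ∑ r, ∑ s, num t x a b p r * num t (x * y) p c a' s * num t y r s b' c' =
    ∑ r, ∑ s, ∑ p, num t y b c r s * num t (x * y) a s p c' * num t x p r a' b' := by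
  by_cases h : (a : ℕ) + b + c = a' + b' + c'
  · exact num_yang_baxter_of_weight_eq t x y _ _ _ _ _ _ h
  -- Each factor conserves weight, so every summand on either side vanishes.
  · trans 0
    · refine Finset.sum_eq_zero fun p _ => Finset.sum_eq_zero fun r _ =>
        Finset.sum_eq_zero fun s _ => ?_
      by_contra h0
      simp only [mul_eq_zero, not_or] at h0
      have h1 := weight_eq_of_num_ne_zero _ _ _ _ _ _ h0.1.1
      have h2 := weight_eq_of_num_ne_zero _ _ _ _ _ _ h0.1.2
      have h3 := weight_eq_of_num_ne_zero _ _ _ _ _ _ h0.2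
      omega
    · refine (Finset.sum_eq_zero fun r _ => Finset.sum_eq_zero fun s _ =>
        Finset.sum_eq_zero fun p _ => ?_).symm
      by_contra h0
      simp only [mul_eq_zero, not_or] at h0
      have h1 := weight_eq_of_num_ne_zero _ _ _ _ _ _ h0.1.1
      have h2 := weight_eq_of_num_ne_zero _ _ _ _ _ _ h0.1.2
      have h3 := weight_eq_of_num_ne_zero _ _ _ _ _ _ h0.2
      omega

set_option maxHeartbeats 1000000 in
theorem IKRpair_eq (t x : L) (h : nN t x ≠ 0) :
    IKRpair t x =
      (nN t x)⁻¹ • (Matrix.of fun i j : Fin 3 × Fin 3 => num t x i.1 i.2 j.1 j.2) := by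
  obtain ⟨h1, h2⟩ := mul_ne_zero_iff.mp h
  ext ⟨i, j⟩ ⟨k, l⟩
  rw [Matrix.smul_apply, smul_eq_mul, eq_inv_mul_iff_mul_eq₀ h, Matrix.of_apply]
  revert i j k l
  refine forall_three ?_ ?_ ?_ <;> refine forall_three ?_ ?_ ?_ <;>
    refine forall_three ?_ ?_ ?_ <;> refine forall_three ?_ ?_ ?_ <;>
    simp [IKRpair, IKR, num] <;>
    simp only [nN, nA, nB, nC, nD, nE, nF, nG, nP, nS] <;> field_simp

theorem R12_smul (c : L) (A : Matrix (Fin 3 × Fin 3) (Fin 3 × Fin 3) L) :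
    R12 (c • A) = c • R12 A := by
  ext; simp [R12]

theorem R13_smul (c : L) (A : Matrix (Fin 3 × Fin 3) (Fin 3 × Fin 3) L) :
    R13 (c • A) = c • R13 A := by
  ext; simp [R13]

theorem R23_smul (c : L) (A : Matrix (Fin 3 × Fin 3) (Fin 3 × Fin 3) L) :
    R23 (c • A) = c • R23 A := by
  ext; simp [R23]

/-- Components of `A₁₂ B₁₃ C₂₃`: the identity factors collapse the two intermediate sums over
`V ⊗ V ⊗ V` to a sum over three indices. -/
theorem mul_apply_left (A B C : Matrix (Fin 3 × Fin 3) (Fin 3 × Fin 3) L)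
    (a b c a' b' c' : Fin 3) :
    (R12 A * R13 B * R23 C) (a, b, c) (a', b', c') =
      ∑ p, ∑ r, ∑ s, A (a, b) (p, r) * B (p, c) (a', s) * C (r, s) (b', c') := by
  rw [Matrix.mul_assoc]
  simp [Matrix.mul_apply, R12, R13, R23, Fintype.sum_prod_type, Finset.mul_sum, mul_assoc]

/-- Components of `C₂₃ B₁₃ A₁₂`. -/
theorem mul_apply_right (A B C : Matrix (Fin 3 × Fin 3) (Fin 3 × Fin 3) L)
    (a b c a' b' c' : Fin 3) :
    (R23 C * R13 B * R12 A) (a, b, c) (a', b', c') =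
      ∑ r, ∑ s, ∑ p, C (b, c) (r, s) * B (a, s) (p, c') * A (p, r) (a', b') := by
  rw [Matrix.mul_assoc]
  simp [Matrix.mul_apply, R12, R13, R23, Fintype.sum_prod_type, Finset.mul_sum, mul_assoc]

theorem yang_baxter_of_ne_zero (t x y : L) (hx : nN t x ≠ 0) (hxy : nN t (x * y) ≠ 0)
    (hy : nN t y ≠ 0) :
    R12 (IKRpair t x) * R13 (IKRpair t (x * y)) * R23 (IKRpair t y) =
      R23 (IKRpair t y) * R13 (IKRpair t (x * y)) * R12 (IKRpair t x) := by
  rw [IKRpair_eq t x hx, IKRpair_eq t (x * y) hxy, IKRpair_eq t y hy]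
  simp only [R12_smul, R13_smul, R23_smul, Matrix.smul_mul, Matrix.mul_smul, smul_smul]
  congr 1
  · ring
  · ext ⟨a, b, c⟩ ⟨a', b', c'⟩
    rw [mul_apply_left, mul_apply_right]
    exact num_yang_baxter t x y a b c a' b' c'

theorem C_mul_X_add_C_ne_zero (c d : L) (hd : d ≠ 0) :
    RatFunc.C c * RatFunc.X + RatFunc.C d ≠ (0 : RatFunc L) := by
  intro h
  have h' : algebraMap (Polynomial L) (RatFunc L)
      (Polynomial.C c * Polynomial.X + Polynomial.C d) = 0 := by
    simpa [RatFunc.algebraMap_C, RatFunc.algebraMap_X] using h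
  rw [map_eq_zero_iff _ (RatFunc.algebraMap_injective L)] at h'
  apply hd
  simpa using congrArg (Polynomial.eval 0) h'

/-- The denominator does not vanish at `u X`, for constants `t` and `u`. Taking `u = x` covers the
spectral parameter `xy`, and `u = 1` covers `x` and `y`. -/
theorem nN_ne_zero (t u : L) : nN (RatFunc.C t) (RatFunc.C u * RatFunc.X) ≠ 0 := by
  refine mul_ne_zero ?_ ?_
  · have := C_mul_X_add_C_ne_zero (t ^ 4 * u) (-1) (by simp)
    simpa [mul_assoc, sub_eq_add_neg] using this
  · have := C_mul_X_add_C_ne_zero (t ^ 6 * u) 1 one_ne_zero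
    simpa [mul_assoc] using this

end
end IzerginKorepin

/-- The Izergin–Korepin R-matrix satisfies the quantum Yang–Baxter equation with
multiplicative spectral parameters, `R₁₂(x) R₁₃(xy) R₂₃(y) = R₂₃(y) R₁₃(xy) R₁₂(x)`,
as an identity over the field of rational functions in two indeterminates `x`, `y`. -/
theorem IKR_yang_baxter {K : Type*} [Field K] (sq : K) (hsq : sq ≠ 0) :
    letI L := RatFunc (RatFunc K)
    letI sqL : L := RatFunc.C (RatFunc.C sq)
    letI x : L := RatFunc.C RatFunc.X
    letI y : L := RatFunc.X
    R12 (IKRpair sqL x) * R13 (IKRpair sqL (x * y)) * R23 (IKRpair sqL y) =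
      R23 (IKRpair sqL y) * R13 (IKRpair sqL (x * y)) * R12 (IKRpair sqL x) := by
  have hX := IzerginKorepin.nN_ne_zero sq 1
  rw [map_one, one_mul] at hX
  refine IzerginKorepin.yang_baxter_of_ne_zero _ _ _ ?_ ?_ ?_
  · have h := (map_ne_zero (RatFunc.C : RatFunc K →+* RatFunc (RatFunc K))).2 hX
    simpa [IzerginKorepin.nN] using h
  · exact IzerginKorepin.nN_ne_zero _ _
  · simpa using IzerginKorepin.nN_ne_zero (RatFunc.C sq) 1
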